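/- Let A be a Büchi automaton over a finite alphabet Σ and let τ be a factorisation of a sequence σ : ℕ → Σ. Then A accepts σ if and only if there exists an accepting quasi-run of A on τ. -/

import Mathlib

namespace Buechi

/-- Nonempty finite strings over `α`, given as a head together with a tail. -/
abbrev NStr (α : Type*) : Type _ := α × List α

/-- The list of symbols of a nonempty string. -/
def NStr.toList {α : Type*} (s : NStr α) : List α := s.1 :: s.2

/-- Büchi automata over alphabet `α`: a finite type of states, a transition
relation, initial states and accepting states. -/
structure BA (α : Type*) where
  Q : Type
  fin : Fintype Q
  trans : Q → α → Q → Prop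
  init : Q → Prop
  accept : Q → Prop

/-- Büchi acceptance: there is a run starting in an initial state, respecting the
transition relation, and visiting accepting states infinitely often. -/
def BA.Accepts {α : Type*} (M : BA α) (σ : ℕ → α) : Prop :=
  ∃ ρ : ℕ → M.Q, M.init (ρ 0) ∧ (∀ n, M.trans (ρ n) (σ n) (ρ (n + 1))) ∧
    ∀ k, ∃ n, k ≤ n ∧ M.accept (ρ n)

/-- `M.StepsL p x q`: there is a path on the list `x` from `p` to `q` whose
consecutive transitions are labelled by the successive symbols of `x`. -/
def BA.StepsL {α : Type*} (M : BA α) : M.Q → List α → M.Q → Prop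
  | p, [], q => p = q
  | p, a :: x, q => ∃ r, M.trans p a r ∧ M.StepsL r x q

/-- `M.StepsAccL p x q`: there is a path on `x` from `p` to `q` passing through an
accepting state before its last position. -/
def BA.StepsAccL {α : Type*} (M : BA α) : M.Q → List α → M.Q → Prop
  | _, [], _ => False
  | p, a :: x, q => ∃ r, M.trans p a r ∧ ((M.accept p ∧ M.StepsL r x q) ∨ M.StepsAccL r x q)

/-- `p ⇒x q` for a nonempty string `x`. -/
def BA.Steps {α : Type*} (M : BA α) (p : M.Q) (x : NStr α) (q : M.Q) : Prop :=
  M.StepsL p x.toList q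

/-- `p ⇒x! q` for a nonempty string `x`. -/
def BA.StepsAcc {α : Type*} (M : BA α) (p : M.Q) (x : NStr α) (q : M.Q) : Prop :=
  M.StepsAccL p x.toList q

/-- `(x, y)` is a match of `M`: there are states `p`, `q` with `p` initial,
`p ⇒x q` and `q ⇒y! q`. -/
def BA.IsMatch {α : Type*} (M : BA α) (x y : NStr α) : Prop :=
  ∃ p q, M.init p ∧ M.Steps p x q ∧ M.StepsAcc q y q

/-- The ultimately periodic sequence `x·y^ω = x y y y ⋯`. -/
def upSeq {α : Type*} (x y : NStr α) (n : ℕ) : α :=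
  if h : n < x.toList.length then x.toList.get ⟨n, h⟩
  else y.toList.get ⟨(n - x.toList.length) % y.toList.length,
    Nat.mod_lt _ (by simp [NStr.toList])⟩

/-- Starting position of the `n`-th factor of a factorisation `τ`. -/
def facStart {α : Type*} (τ : ℕ → NStr α) : ℕ → ℕ
  | 0 => 0
  | n + 1 => facStart τ n + (τ n).toList.length

/-- `τ` is a factorisation of `σ`: `σ` equals the infinite concatenation
`(τ 0)(τ 1)(τ 2)⋯`. -/
def IsFactorisation {α : Type*} (τ : ℕ → NStr α) (σ : ℕ → α) : Prop :=
  ∀ (n k : ℕ) (h : k < (τ n).toList.length),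
    (τ n).toList.get ⟨k, h⟩ = σ (facStart τ n + k)

/-!
All paths are indexed by positions in `σ`, so that a run of `A` restricts to a path on each factor
`τ n`, occupying the positions between two consecutive factor starts. Conversely, the paths
witnessing the steps of a quasi-run agree at the factor starts, where consecutive ones meet, and
glue to a run. Factors are nonempty, so there are infinitely many factor starts and each position
belongs to exactly one factor; hence accepting states at infinitely many positions and accepting
steps on infinitely many factors amount to the same thing, provided the witness of a step is chosen
to visit an accepting state whenever possible.
-/

theorem exists_eqOn_Icc_of_strictMono {β : Type*} {f : ℕ → ℕ} (hf : StrictMono f)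
    (g : ℕ → ℕ → β) (hg : ∀ n, g n (f (n + 1)) = g (n + 1) (f (n + 1))) :
    ∃ ρ : ℕ → β, ∀ n, Set.EqOn ρ (g n) (Set.Icc (f n) (f (n + 1))) := by
  let index m := Nat.findGreatest (f · ≤ m) m
  have index_eq {n m : ℕ} (hm : m ∈ Set.Ico (f n) (f (n + 1))) : index m = n :=
    Nat.findGreatest_eq_iff.2 ⟨hf.le_apply.trans hm.1, fun _ ↦ hm.1,
      fun _ hn _ ↦ (hm.2.trans_le (hf.monotone hn)).not_ge⟩
  refine ⟨fun m ↦ g (index m) m, fun n m hm ↦ ?_⟩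
  rcases hm.2.lt_or_eq with hlt | rfl
  · exact congrArg (g · m) (index_eq ⟨hm.1, hlt⟩)
  · have h_index : index (f (n + 1)) = n + 1 := index_eq ⟨le_rfl, hf (Nat.lt_succ_self _)⟩
    simp only [h_index, hg]

section FactorStarts

variable {α : Type*} (τ : ℕ → NStr α)

theorem strictMono_facStart : StrictMono (facStart τ) :=
  strictMono_nat_of_lt_succ fun _ ↦ Nat.lt_add_of_pos_right (Nat.succ_pos _)

theorem exists_mem_Ico_facStart (m : ℕ) :
    ∃ n, m ∈ Set.Ico (facStart τ n) (facStart τ (n + 1)) := by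
  have hτ := strictMono_facStart τ
  have hcover : ⋃ n, Set.Ico (facStart τ n) (facStart τ (Order.succ n)) = Set.Ici 0 :=
    iUnion_Ico_map_succ_eq_Ici (fun n ↦ hτ.monotone n.zero_le)
      hτ.not_bddAbove_range_of_wellFoundedLT
  exact Set.mem_iUnion.1 (hcover ▸ m.zero_le)

end FactorStarts

namespace BA

variable {α : Type*} {M : BA α} {σ : ℕ → α} {i j : ℕ} {ρ π : ℕ → M.Q} {p q : M.Q}

/-- `M.IsRunOn σ i j ρ`: at every position of the interval `[i, j)`, the sequence `ρ` takes a
transition of `M` labelled by `σ`. Finite paths are encoded by total sequences, of which only the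
states at positions in `[i, j]` matter, so that the position of a path inside `σ` is kept. -/
def IsRunOn (M : BA α) (σ : ℕ → α) (i j : ℕ) (ρ : ℕ → M.Q) : Prop :=
  ∀ m ∈ Set.Ico i j, M.trans (ρ m) (σ m) (ρ (m + 1))

theorem IsRunOn.congr (hπ : M.IsRunOn σ i j π) (h : Set.EqOn ρ π (Set.Icc i j)) :
    M.IsRunOn σ i j ρ := fun m hm ↦ by
  rw [h ⟨hm.1, hm.2.le⟩, h ⟨hm.1.trans m.le_succ, hm.2⟩]
  exact hπ m hm

theorem IsRunOn.update (hπ : M.IsRunOn σ (i + 1) j π) (hp : M.trans p (σ i) (π (i + 1))) :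
    M.IsRunOn σ i j (Function.update π i p) := by
  rintro m ⟨him, hmj⟩
  rcases him.eq_or_lt with rfl | him
  · simpa using hp
  · simpa [him.ne', (him.trans m.lt_succ_self).ne'] using hπ m ⟨him, hmj⟩

theorem IsRunOn.tail (hπ : M.IsRunOn σ i j π) : M.IsRunOn σ (i + 1) j π :=
  fun m hm ↦ hπ m ⟨(Nat.le_succ i).trans hm.1, hm.2⟩

theorem stepsL_map_Ico_iff (hij : i ≤ j) :
    M.StepsL p ((List.Ico i j).map σ) q ↔
      ∃ π, π i = p ∧ π j = q ∧ M.IsRunOn σ i j π := by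
  induction hij using Nat.decreasingInduction generalizing p with
  | self =>
    simp only [List.Ico.self_empty, List.map_nil, StepsL]
    constructor
    · exact fun hpq ↦ ⟨fun _ ↦ p, rfl, hpq, fun m hm ↦ absurd hm.2 hm.1.not_gt⟩
    · rintro ⟨π, rfl, rfl, -⟩
      rfl
  | of_succ i hij ih =>
    simp only [List.Ico.eq_cons hij, List.map_cons, StepsL, ih]
    constructor
    · rintro ⟨_, hp, π, rfl, hq, hπ⟩
      exact ⟨Function.update π i p, Function.update_self .., by rwa [Function.update_of_ne hij.ne'],
        hπ.update hp⟩
    · rintro ⟨π, rfl, hq, hπ⟩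
      exact ⟨π (i + 1), hπ i ⟨le_rfl, hij⟩, π, rfl, hq, hπ.tail⟩

theorem stepsAccL_map_Ico_iff (hij : i ≤ j) :
    M.StepsAccL p ((List.Ico i j).map σ) q ↔
      ∃ π, π i = p ∧ π j = q ∧ M.IsRunOn σ i j π ∧ ∃ m ∈ Set.Ico i j, M.accept (π m) := by
  induction hij using Nat.decreasingInduction generalizing p with
  | self => simp [StepsAccL]
  | of_succ i hij ih =>
    simp only [List.Ico.eq_cons hij, List.map_cons, StepsAccL, ih, stepsL_map_Ico_iff hij]
    constructor
    · rintro ⟨_, hp, ⟨hacc, π, rfl, hq, hπ⟩ | ⟨π, rfl, hq, hπ, m, hm, hacc⟩⟩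
      · exact ⟨Function.update π i p, Function.update_self ..,
          by rwa [Function.update_of_ne hij.ne'], hπ.update hp, i, ⟨le_rfl, hij⟩,
          by rwa [Function.update_self]⟩
      · have him : i < m := hm.1
        exact ⟨Function.update π i p, Function.update_self ..,
          by rwa [Function.update_of_ne hij.ne'], hπ.update hp, m, ⟨him.le, hm.2⟩,
          by rwa [Function.update_of_ne him.ne']⟩
    · rintro ⟨π, rfl, hq, hπ, m, hm, hacc⟩
      refine ⟨π (i + 1), hπ i ⟨le_rfl, hij⟩, ?_⟩
      rcases hm.1.eq_or_lt with rfl | him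
      · exact .inl ⟨hacc, π, rfl, hq, hπ.tail⟩
      · exact .inr ⟨π, rfl, hq, hπ.tail, m, ⟨him, hm.2⟩, hacc⟩

/-- `ρ` is an accepting quasi-run of `M` on `τ`: it starts in an initial state and reads the whole
string `τ n` between `ρ n` and `ρ (n + 1)`, infinitely often passing through an accepting state. -/
def IsAcceptingQuasiRun (M : BA α) (τ : ℕ → NStr α) (ρ : ℕ → M.Q) : Prop :=
  M.init (ρ 0) ∧ (∀ n, M.Steps (ρ n) (τ n) (ρ (n + 1))) ∧
    ∀ k, ∃ n, k ≤ n ∧ M.StepsAcc (ρ n) (τ n) (ρ (n + 1))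

end BA

namespace IsFactorisation

variable {α : Type*} {M : BA α} {τ : ℕ → NStr α} {σ : ℕ → α}

theorem toList_eq_map_Ico (h : IsFactorisation τ σ) (n : ℕ) :
    (τ n).toList = (List.Ico (facStart τ n) (facStart τ (n + 1))).map σ :=
  List.ext_getElem (by simp [facStart]) fun k hk _ ↦ by
    simpa [List.Ico] using h n k hk

theorem steps_iff (h : IsFactorisation τ σ) {n : ℕ} {p q : M.Q} :
    M.Steps p (τ n) q ↔ ∃ π, π (facStart τ n) = p ∧ π (facStart τ (n + 1)) = q ∧
      M.IsRunOn σ (facStart τ n) (facStart τ (n + 1)) π := by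
  rw [BA.Steps, h.toList_eq_map_Ico]
  exact BA.stepsL_map_Ico_iff ((strictMono_facStart τ).monotone n.le_succ)

theorem stepsAcc_iff (h : IsFactorisation τ σ) {n : ℕ} {p q : M.Q} :
    M.StepsAcc p (τ n) q ↔ ∃ π, π (facStart τ n) = p ∧ π (facStart τ (n + 1)) = q ∧
      M.IsRunOn σ (facStart τ n) (facStart τ (n + 1)) π ∧
      ∃ m ∈ Set.Ico (facStart τ n) (facStart τ (n + 1)), M.accept (π m) := by
  rw [BA.StepsAcc, h.toList_eq_map_Ico]
  exact BA.stepsAccL_map_Ico_iff ((strictMono_facStart τ).monotone n.le_succ)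

theorem exists_isAcceptingQuasiRun (h : IsFactorisation τ σ) (hM : M.Accepts σ) :
    ∃ ρ, M.IsAcceptingQuasiRun τ ρ := by
  obtain ⟨ρ, hinit, htrans, hacc⟩ := hM
  refine ⟨ρ ∘ facStart τ, hinit, fun n ↦ h.steps_iff.2 ⟨ρ, rfl, rfl, fun m _ ↦ htrans m⟩,
    fun k ↦ ?_⟩
  obtain ⟨m, hkm, hm⟩ := hacc (facStart τ k)
  obtain ⟨n, hmn⟩ := exists_mem_Ico_facStart τ m
  have hkn : k < n + 1 := (strictMono_facStart τ).lt_iff_lt.1 (hkm.trans_lt hmn.2)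
  exact ⟨n, Nat.le_of_lt_succ hkn,
    h.stepsAcc_iff.2 ⟨ρ, rfl, rfl, fun m _ ↦ htrans m, m, hmn, hm⟩⟩

theorem exists_isRunOn_of_steps (h : IsFactorisation τ σ) {n : ℕ} {p q : M.Q}
    (hpq : M.Steps p (τ n) q) :
    ∃ π, π (facStart τ n) = p ∧ π (facStart τ (n + 1)) = q ∧
      M.IsRunOn σ (facStart τ n) (facStart τ (n + 1)) π ∧
      (M.StepsAcc p (τ n) q →
        ∃ m ∈ Set.Ico (facStart τ n) (facStart τ (n + 1)), M.accept (π m)) := by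
  by_cases hacc : M.StepsAcc p (τ n) q
  · obtain ⟨π, hp, hq, hπ, hm⟩ := h.stepsAcc_iff.1 hacc
    exact ⟨π, hp, hq, hπ, fun _ ↦ hm⟩
  · obtain ⟨π, hp, hq, hπ⟩ := h.steps_iff.1 hpq
    exact ⟨π, hp, hq, hπ, fun hacc' ↦ absurd hacc' hacc⟩

theorem accepts_of_isAcceptingQuasiRun (h : IsFactorisation τ σ) {ρ : ℕ → M.Q}
    (hρ : M.IsAcceptingQuasiRun τ ρ) : M.Accepts σ := by
  obtain ⟨hinit, hsteps, hacc⟩ := hρ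
  have hτ := strictMono_facStart τ
  choose π hleft hright hπ hπacc using fun n ↦ h.exists_isRunOn_of_steps (hsteps n)
  obtain ⟨run, hrun⟩ := exists_eqOn_Icc_of_strictMono hτ π
    fun n ↦ (hright n).trans (hleft (n + 1)).symm
  refine ⟨run, ?_, fun m ↦ ?_, fun k ↦ ?_⟩
  · have hzero : run 0 = ρ 0 := (hrun 0 ⟨le_rfl, Nat.zero_le _⟩).trans (hleft 0)
    rwa [hzero]
  · obtain ⟨n, hmn⟩ := exists_mem_Ico_facStart τ m
    exact (hπ n).congr (hrun n) m hmn
  · obtain ⟨n, hkn, hn⟩ := hacc k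
    obtain ⟨m, hmn, hm⟩ := hπacc n hn
    refine ⟨m, (hkn.trans hτ.le_apply).trans hmn.1, ?_⟩
    rwa [hrun n ⟨hmn.1, hmn.2.le⟩]

end IsFactorisation

theorem accepts_iff_accepting_quasi_run_general {α : Type*} (A : BA α)
    (σ : ℕ → α) (τ : ℕ → NStr α) (h : IsFactorisation τ σ) :
    A.Accepts σ ↔
      ∃ ρ : ℕ → A.Q, A.init (ρ 0) ∧ (∀ n, A.Steps (ρ n) (τ n) (ρ (n + 1))) ∧
        ∀ k, ∃ n, k ≤ n ∧ A.StepsAcc (ρ n) (τ n) (ρ (n + 1)) :=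
  ⟨h.exists_isAcceptingQuasiRun, fun ⟨_, hρ⟩ ↦ h.accepts_of_isAcceptingQuasiRun hρ⟩

/-- Given a factorisation `τ` of `σ`, the automaton `A` accepts `σ` iff there is
an accepting quasi-run of `A` on `τ`. -/
theorem accepts_iff_accepting_quasi_run {α : Type*} [Fintype α] (A : BA α)
    (σ : ℕ → α) (τ : ℕ → NStr α) (h : IsFactorisation τ σ) :
    A.Accepts σ ↔
      ∃ ρ : ℕ → A.Q, A.init (ρ 0) ∧ (∀ n, A.Steps (ρ n) (τ n) (ρ (n + 1))) ∧
        ∀ k, ∃ n, k ≤ n ∧ A.StepsAcc (ρ n) (τ n) (ρ (n + 1)) :=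
  accepts_iff_accepting_quasi_run_general A σ τ h

end Buechi
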